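/- Let N ≥ 1, α, β ≥ 1, A, B ≥ 0 with min{A,B} ≥ 1, and let 1 ≤ σ ≤ min{A,B}. Then there exists a positive constant γ₂, depending only on N, α, β, A, B, σ, with the following property: for every nonnegative measurable function w₀ on ℝ^N with w₀ ∈ L^σ_loc(ℝ^N) and S(t)w₀^σ ∈ L^∞(ℝ^N) for all t > 0, if sup_{0<t≤T} [ ‖S(t)w₀^σ‖_{L^∞(ℝ^N)}^{1−1/σ} · ∫₀ᵗ ( ‖S(s)w₀^σ‖_{L^∞(ℝ^N)}^{A/σ − 1} + ‖S(s)w₀^σ‖_{L^∞(ℝ^N)}^{B/σ − 1} ) ds ] ≤ γ₂ for some T > 0, then the scalar problem (E) with initial data w₀ possesses a solution w on ℝ^N × (0,T] satisfying 0 ≤ w(x,t) ≤ 2 [S(t)w₀^σ](x)^{1/σ} for a.e. x ∈ ℝ^N and all t ∈ (0,T]. -/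

import Mathlib

open MeasureTheory ENNReal Filter

noncomputable section

/-- Euclidean space `ℝ^N`. -/
abbrev Euc (N : ℕ) := EuclideanSpace ℝ (Fin N)

/-- The heat semigroup applied to a (nonnegative) function `φ` on `ℝ^N`, with values in `[0,∞]`:
`[S(t)φ](x) = ∫ (4πt)^{-N/2} exp(-|x-y|²/(4t)) φ(y) dy`. -/
noncomputable def heatS (N : ℕ) (t : ℝ) (φ : Euc N → ℝ) (x : Euc N) : ℝ≥0∞ :=
  ∫⁻ y, ENNReal.ofReal
    ((4 * Real.pi * t) ^ (-(N : ℝ) / 2) * Real.exp (-‖x - y‖ ^ 2 / (4 * t)) * φ y)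

/-- The `L^∞` norm of `S(t)φ` on `ℝ^N`. -/
noncomputable def heatSup (N : ℕ) (t : ℝ) (φ : Euc N → ℝ) : ℝ≥0∞ :=
  essSup (heatS N t φ) volume

/-- The `L^{r,∞}(E)` quasinorm: for `1 < r < ∞` it is
`sup_{λ>0} λ |{x ∈ E : |f x| > λ}|^{1/r}`; for `r = 1` (resp. `r = ∞`)
it is the usual `L¹(E)` (resp. `L^∞(E)`) norm. -/
noncomputable def wnorm (N : ℕ) (r : ℝ≥0∞) (f : Euc N → ℝ) (E : Set (Euc N)) : ℝ≥0∞ :=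
  if r = 1 then ∫⁻ x in E, ENNReal.ofReal |f x|
  else if r = ⊤ then essSup (fun x => ENNReal.ofReal |f x|) (volume.restrict E)
  else ⨆ (l : ℝ) (_ : 0 < l), ENNReal.ofReal l * (volume {x ∈ E | l < |f x|}) ^ (1 / r.toReal)

/-- The uniformly local quasinorm `|||f|||_{r,ρ} = sup_x ‖f‖_{L^{r,∞}(B(x,ρ))}`
(for `r = ∞` it is the `L^∞(ℝ^N)` norm). -/
noncomputable def ulocNorm (N : ℕ) (r : ℝ≥0∞) (ρ : ℝ) (f : Euc N → ℝ) : ℝ≥0∞ :=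
  if r = ⊤ then essSup (fun x => ENNReal.ofReal |f x|) volume
  else ⨆ x : Euc N, wnorm N r f (Metric.ball x ρ)

/-- `u ∈ L^∞(τ, T-τ; L^∞(ℝ^N))` for every `τ ∈ (0, T/2)`. -/
def LocBdd (N : ℕ) (T : ℝ≥0∞) (u : Euc N → ℝ → ℝ) : Prop :=
  ∀ τ : ℝ, 0 < τ → ENNReal.ofReal (2 * τ) < T →
    ∃ M : ℝ, ∀ t : ℝ, τ ≤ t → ENNReal.ofReal (t + τ) ≤ T →
      ∀ᵐ x ∂(volume : Measure (Euc N)), |u x t| ≤ M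

/-- Regularity requirements on a pair `(u,v)`: nonnegativity, joint measurability and
uniform boundedness away from `t = 0` and `t = T`. -/
def PairRegular (N : ℕ) (T : ℝ≥0∞) (u v : Euc N → ℝ → ℝ) : Prop :=
  (∀ x t, 0 ≤ u x t) ∧ (∀ x t, 0 ≤ v x t) ∧
  Measurable (Function.uncurry u) ∧ Measurable (Function.uncurry v) ∧
  LocBdd N T u ∧ LocBdd N T v

/-- The Duhamel identities for the system (S) `∂ₜu = Δu + v^p`, `∂ₜv = Δv + u^q` at time `t`. -/
def DuhamelSys (N : ℕ) (p q : ℝ) (u₀ v₀ : Euc N → ℝ) (u v : Euc N → ℝ → ℝ) (t : ℝ) : Prop :=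
  (∀ᵐ x ∂(volume : Measure (Euc N)), ENNReal.ofReal (u x t) =
      heatS N t u₀ x + ∫⁻ s in Set.Ioo 0 t, heatS N (t - s) (fun y => v y s ^ p) x) ∧
  (∀ᵐ x ∂(volume : Measure (Euc N)), ENNReal.ofReal (v x t) =
      heatS N t v₀ x + ∫⁻ s in Set.Ioo 0 t, heatS N (t - s) (fun y => u y s ^ q) x)

/-- The Duhamel inequalities (`≥`, with finite left-hand side) for the system (S) at time `t`. -/
def DuhamelSuperSys (N : ℕ) (p q : ℝ) (u₀ v₀ : Euc N → ℝ) (u v : Euc N → ℝ → ℝ) (t : ℝ) : Prop :=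
  (∀ᵐ x ∂(volume : Measure (Euc N)),
      heatS N t u₀ x + (∫⁻ s in Set.Ioo 0 t, heatS N (t - s) (fun y => v y s ^ p) x) ≤
        ENNReal.ofReal (u x t)) ∧
  (∀ᵐ x ∂(volume : Measure (Euc N)),
      heatS N t v₀ x + (∫⁻ s in Set.Ioo 0 t, heatS N (t - s) (fun y => u y s ^ q) x) ≤
        ENNReal.ofReal (v x t))

/-- `(u,v)` is a solution of the system (S) on `ℝ^N × (0,T)`. -/
def IsSolSys (N : ℕ) (p q : ℝ) (u₀ v₀ : Euc N → ℝ) (T : ℝ≥0∞) (u v : Euc N → ℝ → ℝ) : Prop :=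
  PairRegular N T u v ∧
  ∀ t : ℝ, 0 < t → ENNReal.ofReal t < T → DuhamelSys N p q u₀ v₀ u v t

/-- `(u,v)` is a supersolution of the system (S) on `ℝ^N × (0,T)`. -/
def IsSuperSys (N : ℕ) (p q : ℝ) (u₀ v₀ : Euc N → ℝ) (T : ℝ≥0∞) (u v : Euc N → ℝ → ℝ) : Prop :=
  PairRegular N T u v ∧
  ∀ t : ℝ, 0 < t → ENNReal.ofReal t < T → DuhamelSuperSys N p q u₀ v₀ u v t

/-- `(u,v)` is the minimal solution of the system (S) on `ℝ^N × (0,T)`. -/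
def IsMinSolSys (N : ℕ) (p q : ℝ) (u₀ v₀ : Euc N → ℝ) (T : ℝ≥0∞)
    (u v : Euc N → ℝ → ℝ) : Prop :=
  IsSolSys N p q u₀ v₀ T u v ∧
  ∀ u' v' : Euc N → ℝ → ℝ, IsSolSys N p q u₀ v₀ T u' v' →
    ∀ t : ℝ, 0 < t → ENNReal.ofReal t < T →
      (∀ᵐ x ∂(volume : Measure (Euc N)), u x t ≤ u' x t) ∧
      (∀ᵐ x ∂(volume : Measure (Euc N)), v x t ≤ v' x t)

/-- Regularity requirements on a scalar function `w`. -/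
def ScalarRegular (N : ℕ) (T : ℝ≥0∞) (w : Euc N → ℝ → ℝ) : Prop :=
  (∀ x t, 0 ≤ w x t) ∧ Measurable (Function.uncurry w) ∧ LocBdd N T w

/-- The Duhamel identity for the scalar problem (E) `∂ₜw = Δw + α w^A + β w^B` at time `t`. -/
def DuhamelScalar (N : ℕ) (α β A B : ℝ) (w₀ : Euc N → ℝ) (w : Euc N → ℝ → ℝ) (t : ℝ) : Prop :=
  ∀ᵐ x ∂(volume : Measure (Euc N)), ENNReal.ofReal (w x t) =
    heatS N t w₀ x +
      ∫⁻ s in Set.Ioo 0 t, heatS N (t - s) (fun y => α * w y s ^ A + β * w y s ^ B) x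

/-- The Duhamel inequality (`≥`, with finite left-hand side) for the scalar problem (E). -/
def DuhamelSuperScalar (N : ℕ) (α β A B : ℝ) (w₀ : Euc N → ℝ) (w : Euc N → ℝ → ℝ)
    (t : ℝ) : Prop :=
  ∀ᵐ x ∂(volume : Measure (Euc N)),
    heatS N t w₀ x +
        (∫⁻ s in Set.Ioo 0 t, heatS N (t - s) (fun y => α * w y s ^ A + β * w y s ^ B) x) ≤
      ENNReal.ofReal (w x t)

/-- `w` is a solution of the scalar problem (E) on `ℝ^N × (0,T)`. -/
def IsSolScalar (N : ℕ) (α β A B : ℝ) (w₀ : Euc N → ℝ) (T : ℝ≥0∞)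
    (w : Euc N → ℝ → ℝ) : Prop :=
  ScalarRegular N T w ∧
  ∀ t : ℝ, 0 < t → ENNReal.ofReal t < T → DuhamelScalar N α β A B w₀ w t

/-- `w` is a supersolution of the scalar problem (E) on `ℝ^N × (0,T)`. -/
def IsSuperScalar (N : ℕ) (α β A B : ℝ) (w₀ : Euc N → ℝ) (T : ℝ≥0∞)
    (w : Euc N → ℝ → ℝ) : Prop :=
  ScalarRegular N T w ∧
  ∀ t : ℝ, 0 < t → ENNReal.ofReal t < T → DuhamelSuperScalar N α β A B w₀ w t

/-- The Duhamel identities for the strongly coupled system (SC)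
`∂ₜu = Δu + u^{p₁} v^{p₂}`, `∂ₜv = Δv + u^{q₁} v^{q₂}` at time `t`. -/
def DuhamelSC (N : ℕ) (p₁ p₂ q₁ q₂ : ℝ) (u₀ v₀ : Euc N → ℝ) (u v : Euc N → ℝ → ℝ)
    (t : ℝ) : Prop :=
  (∀ᵐ x ∂(volume : Measure (Euc N)), ENNReal.ofReal (u x t) =
      heatS N t u₀ x +
        ∫⁻ s in Set.Ioo 0 t, heatS N (t - s) (fun y => u y s ^ p₁ * v y s ^ p₂) x) ∧
  (∀ᵐ x ∂(volume : Measure (Euc N)), ENNReal.ofReal (v x t) =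
      heatS N t v₀ x +
        ∫⁻ s in Set.Ioo 0 t, heatS N (t - s) (fun y => u y s ^ q₁ * v y s ^ q₂) x)

/-- `(u,v)` is a solution of the strongly coupled system (SC) on `ℝ^N × (0,T)`. -/
def IsSolSC (N : ℕ) (p₁ p₂ q₁ q₂ : ℝ) (u₀ v₀ : Euc N → ℝ) (T : ℝ≥0∞)
    (u v : Euc N → ℝ → ℝ) : Prop :=
  PairRegular N T u v ∧
  ∀ t : ℝ, 0 < t → ENNReal.ofReal t < T → DuhamelSC N p₁ p₂ q₁ q₂ u₀ v₀ u v t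

/-!
Write `U t = S(t)w₀^σ` and `M t = ‖U t‖_∞`. The solution is the limit of the increasing Picard
iterates of the Duhamel map, and by monotonicity it lies below any supersolution. The function
`2 U^{1/σ}` is one: by Jensen's inequality `S(t)w₀ ≤ U(t)^{1/σ}`, while
`(2 U(s)^{1/σ})^A ≤ 2^A M(s)^{A/σ-1} U(s)` and the semigroup property `S(t-s)U(s) = U(t)` bound the
Duhamel integral by a constant times `U(t) ∫₀ᵗ (M^{A/σ-1} + M^{B/σ-1}) ds`. Since
`U(t) ≤ U(t)^{1/σ} M(t)^{1-1/σ}`, smallness makes this at most `U(t)^{1/σ}`.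
-/

section Inequalities

lemma lintegral_mul_le_rpow_lintegral_mul_rpow {X : Type*} [MeasurableSpace X] {μ : Measure X}
    {k f : X → ℝ≥0∞} (hk : Measurable k) (hk_one : ∫⁻ x, k x ∂μ = 1) (hf : Measurable f)
    {σ : ℝ} (hσ : 1 ≤ σ) :
    ∫⁻ x, f x * k x ∂μ ≤ (∫⁻ x, f x ^ σ * k x ∂μ) ^ (1 / σ) := by
  have : IsProbabilityMeasure (μ.withDensity k) :=
    ⟨by rw [withDensity_apply _ MeasurableSet.univ, Measure.restrict_univ, hk_one]⟩
  have jensen := eLpNorm'_le_eLpNorm'_of_exponent_le zero_lt_one hσ (μ.withDensity k)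
    hf.aestronglyMeasurable
  simpa only [eLpNorm', enorm_eq_self, ENNReal.rpow_one, div_one,
    lintegral_withDensity_eq_lintegral_mul _ hk hf,
    lintegral_withDensity_eq_lintegral_mul _ hk (hf.pow_const σ), Pi.mul_apply,
    mul_comm (k _)] using jensen

lemma rpow_le_rpow_sub_one_mul {u M : ℝ≥0∞} (huM : u ≤ M) {r : ℝ} (hr : 1 ≤ r) :
    u ^ r ≤ M ^ (r - 1) * u := by
  calc u ^ r = u ^ (r - 1) * u ^ (1 : ℝ) := by
        rw [← ENNReal.rpow_add_of_nonneg _ _ (sub_nonneg.2 hr) zero_le_one, sub_add_cancel]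
    _ ≤ M ^ (r - 1) * u := by
        rw [ENNReal.rpow_one]
        gcongr

lemma le_rpow_mul_rpow_one_sub {u M : ℝ≥0∞} (huM : u ≤ M) {θ : ℝ} (hθ₀ : 0 ≤ θ) (hθ₁ : θ ≤ 1) :
    u ≤ u ^ θ * M ^ (1 - θ) := by
  calc u = u ^ θ * u ^ (1 - θ) := by
        rw [← ENNReal.rpow_add_of_nonneg _ _ hθ₀ (sub_nonneg.2 hθ₁), add_sub_cancel,
          ENNReal.rpow_one]
    _ ≤ u ^ θ * M ^ (1 - θ) := by
        gcongr

lemma exists_pos_mul_ofReal_le_one {C : ℝ≥0∞} (hC : C ≠ ⊤) :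
    ∃ γ : ℝ, 0 < γ ∧ C * ENNReal.ofReal γ ≤ 1 := by
  have hC₀ : 0 ≤ C.toReal := ENNReal.toReal_nonneg
  refine ⟨(C.toReal + 1)⁻¹, by positivity, ?_⟩
  rw [← ENNReal.ofReal_toReal hC, ← ENNReal.ofReal_mul hC₀, ENNReal.ofReal_le_one,
    ENNReal.toReal_ofReal hC₀]
  exact mul_inv_le_one_of_le₀ (lt_add_one _).le (by positivity)

end Inequalities

section HeatKernel

variable {E : Type*} [NormedAddCommGroup E] [InnerProductSpace ℝ E]

/-- The heat kernel `(4πt)^{-dim E / 2} exp(-|z|²/(4t))` of a Euclidean space `E`, valued in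
`[0,∞]` so that convolutions with it are unconditionally defined. -/
def heatKernel (t : ℝ) (z : E) : ℝ≥0∞ :=
  ENNReal.ofReal
    ((4 * Real.pi * t) ^ (-(Module.finrank ℝ E : ℝ) / 2) * Real.exp (-‖z‖ ^ 2 / (4 * t)))

lemma norm_sq_div_add_norm_sub_sq_div {a b : ℝ} (ha : 0 < a) (hb : 0 < b) (x y : E) :
    ‖y‖ ^ 2 / (4 * a) + ‖x - y‖ ^ 2 / (4 * b) =
      ‖x‖ ^ 2 / (4 * (a + b)) + (a + b) / (4 * a * b) * ‖y - (a / (a + b)) • x‖ ^ 2 := by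
  rw [norm_sub_sq_real, norm_sub_sq_real, norm_smul, inner_smul_right, real_inner_comm x y,
    Real.norm_eq_abs, mul_pow, sq_abs]
  field_simp
  ring

lemma gaussian_normalization_mul {a b : ℝ} (ha : 0 < a) (hb : 0 < b) (d : ℝ) :
    (4 * Real.pi * a) ^ (-d / 2) * (4 * Real.pi * b) ^ (-d / 2) *
      (Real.pi / ((a + b) / (4 * a * b))) ^ (d / 2) = (4 * Real.pi * (a + b)) ^ (-d / 2) := by
  simp only [neg_div, Real.rpow_neg_eq_inv_rpow]
  rw [← Real.mul_rpow (by positivity) (by positivity),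
    ← Real.mul_rpow (by positivity) (by positivity)]
  congr 1
  field_simp

variable [MeasurableSpace E] [BorelSpace E]

@[fun_prop]
lemma measurable_heatKernel {X : Type*} [MeasurableSpace X] {τ : X → ℝ} {z : X → E}
    (hτ : Measurable τ) (hz : Measurable z) : Measurable fun p => heatKernel (τ p) (z p) := by
  unfold heatKernel
  fun_prop

variable [FiniteDimensional ℝ E]

lemma lintegral_exp_neg_mul_norm_sub_sq {b : ℝ} (hb : 0 < b) (c : E) :
    ∫⁻ z : E, ENNReal.ofReal (Real.exp (-(b * ‖z - c‖ ^ 2))) =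
      ENNReal.ofReal ((Real.pi / b) ^ ((Module.finrank ℝ E : ℝ) / 2)) := by
  have gaussian := GaussianFourier.integral_rexp_neg_mul_sq_norm (V := E) hb
  simp only [neg_mul] at gaussian
  have gaussian_integrable : Integrable fun z : E => Real.exp (-(b * ‖z‖ ^ 2)) :=
    .of_integral_ne_zero (by rw [gaussian]; positivity)
  rw [lintegral_sub_right_eq_self (fun z : E => ENNReal.ofReal (Real.exp (-(b * ‖z‖ ^ 2)))) c,
    ← ofReal_integral_eq_lintegral_ofReal gaussian_integrable (.of_forall fun _ => by positivity),
    gaussian]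

lemma lintegral_heatKernel {t : ℝ} (ht : 0 < t) : ∫⁻ z : E, heatKernel t z = 1 := by
  have split (z : E) : heatKernel t z =
      ENNReal.ofReal ((4 * Real.pi * t) ^ (-(Module.finrank ℝ E : ℝ) / 2)) *
        ENNReal.ofReal (Real.exp (-(1 / (4 * t) * ‖z - 0‖ ^ 2))) := by
    rw [← ENNReal.ofReal_mul (by positivity), heatKernel, sub_zero]
    ring_nf
  simp_rw [split]
  rw [lintegral_const_mul' _ _ ENNReal.ofReal_ne_top,
    lintegral_exp_neg_mul_norm_sub_sq (by positivity), ← ENNReal.ofReal_mul (by positivity),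
    div_div_eq_mul_div, div_one, mul_left_comm Real.pi, ← mul_assoc,
    ← Real.rpow_add (by positivity), neg_div, neg_add_cancel, Real.rpow_zero, ENNReal.ofReal_one]

lemma heatKernel_lconvolution_heatKernel {a b : ℝ} (ha : 0 < a) (hb : 0 < b) :
    heatKernel a ⋆ₗ heatKernel b = (heatKernel (a + b) : E → ℝ≥0∞) := by
  ext x
  set d : ℝ := (Module.finrank ℝ E : ℝ)
  have complete_square (y : E) : heatKernel a y * heatKernel b (-y + x) =
      ENNReal.ofReal ((4 * Real.pi * a) ^ (-d / 2) * (4 * Real.pi * b) ^ (-d / 2) *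
        Real.exp (-‖x‖ ^ 2 / (4 * (a + b)))) *
      ENNReal.ofReal (Real.exp (-((a + b) / (4 * a * b) * ‖y - (a / (a + b)) • x‖ ^ 2))) := by
    have exp_eq := congrArg (fun r => Real.exp (-r)) (norm_sq_div_add_norm_sub_sq_div ha hb x y)
    simp only [neg_add, Real.exp_add, ← neg_div] at exp_eq
    rw [heatKernel, heatKernel, ← ENNReal.ofReal_mul (by positivity),
      ← ENNReal.ofReal_mul (by positivity), neg_add_eq_sub, mul_mul_mul_comm, exp_eq, ← mul_assoc]
  simp_rw [lconvolution_def, complete_square]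
  rw [lintegral_const_mul' _ _ ENNReal.ofReal_ne_top,
    lintegral_exp_neg_mul_norm_sub_sq (by positivity), ← ENNReal.ofReal_mul (by positivity),
    mul_right_comm, gaussian_normalization_mul ha hb, heatKernel]

end HeatKernel

section HeatSemigroup

variable {E : Type*} [NormedAddCommGroup E] [InnerProductSpace ℝ E] [FiniteDimensional ℝ E]
  [MeasurableSpace E] [BorelSpace E]

/-- The heat semigroup `S(t)` acting on `[0,∞]`-valued functions by convolution. For `0 < t` it
extends `heatS`; at `t ≤ 0` it is a junk value, not the identity. -/
def heatSemigroup (t : ℝ) (f : E → ℝ≥0∞) : E → ℝ≥0∞ :=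
  f ⋆ₗ heatKernel t

lemma measurable_heatSemigroup {X : Type*} [MeasurableSpace X] {τ : X → ℝ} {f : X → E → ℝ≥0∞}
    {x : X → E} (hτ : Measurable τ) (hf : Measurable (Function.uncurry f)) (hx : Measurable x) :
    Measurable fun p => heatSemigroup (τ p) (f p) (x p) := by
  unfold heatSemigroup lconvolution
  refine Measurable.lintegral_prod_right (hf.mul ?_)
  fun_prop

lemma heatSemigroup_mono_ae {f g : E → ℝ≥0∞} (hfg : f ≤ᵐ[volume] g) (t : ℝ) :
    heatSemigroup t f ≤ heatSemigroup t g :=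
  fun _ => lintegral_mono_ae (hfg.mono fun _ hy => mul_le_mul_left hy _)

lemma heatSemigroup_const_mul {f : E → ℝ≥0∞} (hf : Measurable f) (c : ℝ≥0∞) (t : ℝ) (x : E) :
    heatSemigroup t (fun y => c * f y) x = c * heatSemigroup t f x := by
  simp only [heatSemigroup, lconvolution_def, mul_assoc]
  exact lintegral_const_mul c (by fun_prop)

lemma heatSemigroup_iSup {f : ℕ → E → ℝ≥0∞} (hf : ∀ n, Measurable (f n)) (hf_mono : Monotone f)
    (t : ℝ) : heatSemigroup t (⨆ n, f n) = ⨆ n, heatSemigroup t (f n) := by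
  ext x
  simp only [heatSemigroup, lconvolution_def, iSup_apply, ENNReal.iSup_mul]
  refine lintegral_iSup (fun n => ?_) fun m n hmn y => mul_le_mul_left (hf_mono hmn y) _
  have := hf n
  fun_prop

lemma heatSemigroup_heatSemigroup {a b : ℝ} (ha : 0 < a) (hb : 0 < b) {f : E → ℝ≥0∞}
    (hf : Measurable f) : heatSemigroup a (heatSemigroup b f) = heatSemigroup (a + b) f := by
  unfold heatSemigroup
  rw [← lconvolution_assoc hf (by fun_prop) (by fun_prop),
    heatKernel_lconvolution_heatKernel hb ha, add_comm b a]

lemma heatSemigroup_le_rpow {t : ℝ} (ht : 0 < t) {σ : ℝ} (hσ : 1 ≤ σ) {f : E → ℝ≥0∞}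
    (hf : Measurable f) (x : E) :
    heatSemigroup t f x ≤ heatSemigroup t (fun y => f y ^ σ) x ^ (1 / σ) := by
  refine lintegral_mul_le_rpow_lintegral_mul_rpow (by fun_prop) ?_ hf hσ
  simp_rw [neg_add_eq_sub]
  rw [lintegral_sub_left_eq_self (heatKernel t) x, lintegral_heatKernel ht]

lemma lintegral_heatSemigroup_le {g : E → ℝ≥0∞} (hg : Measurable g) {G : ℝ → E → ℝ≥0∞}
    {H : ℝ → ℝ≥0∞} {t : ℝ} (hG : ∀ s ∈ Set.Ioo 0 t, ∀ᵐ y, G s y ≤ H s * heatSemigroup s g y)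
    {x : E} (hx : heatSemigroup t g x ≠ ⊤) :
    ∫⁻ s in Set.Ioo 0 t, heatSemigroup (t - s) (G s) x ≤
      (∫⁻ s in Set.Ioo 0 t, H s) * heatSemigroup t g x := by
  rw [← lintegral_mul_const' _ _ hx]
  refine setLIntegral_mono' measurableSet_Ioo fun s hs => ?_
  have hg_s : Measurable (heatSemigroup s g) :=
    measurable_heatSemigroup measurable_const (hg.comp measurable_snd) measurable_id
  calc heatSemigroup (t - s) (G s) x
      ≤ heatSemigroup (t - s) (fun y => H s * heatSemigroup s g y) x :=
        heatSemigroup_mono_ae (hG s hs) _ x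
    _ = H s * heatSemigroup t g x := by
        rw [heatSemigroup_const_mul hg_s, heatSemigroup_heatSemigroup (sub_pos.2 hs.2) hs.1 hg,
          sub_add_cancel]

end HeatSemigroup

section MinimalSolution

variable {E : Type*} [NormedAddCommGroup E] [InnerProductSpace ℝ E] [FiniteDimensional ℝ E]
  [MeasurableSpace E] [BorelSpace E] {F : ℝ≥0∞ → ℝ≥0∞} {f : E → ℝ≥0∞}

/-- The right-hand side of Duhamel's formula for `∂ₜw = Δw + F(w)`, `w(0) = f`. Its fixed points
are the `[0,∞]`-valued mild solutions; time is the first argument. -/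
def duhamelMap (F : ℝ≥0∞ → ℝ≥0∞) (f : E → ℝ≥0∞) (W : ℝ → E → ℝ≥0∞) (t : ℝ) (x : E) : ℝ≥0∞ :=
  heatSemigroup t f x + ∫⁻ s in Set.Ioo 0 t, heatSemigroup (t - s) (fun y => F (W s y)) x

/-- The smallest `[0,∞]`-valued mild solution of `∂ₜw = Δw + F(w)`, `w(0) = f`, for monotone
continuous `F`: the supremum of the Picard iterates started at zero. -/
def minimalSolution (F : ℝ≥0∞ → ℝ≥0∞) (f : E → ℝ≥0∞) : ℝ → E → ℝ≥0∞ :=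
  ⨆ n, (duhamelMap F f)^[n] ⊥

lemma monotone_duhamelMap (hF : Monotone F) (f : E → ℝ≥0∞) : Monotone (duhamelMap F f) :=
  fun _ _ hVW _ x => add_le_add_right (lintegral_mono fun s =>
    heatSemigroup_mono_ae (.of_forall fun y => hF (hVW s y)) _ x) _

lemma monotone_iterate_duhamelMap (hF : Monotone F) (f : E → ℝ≥0∞) :
    Monotone fun n => (duhamelMap F f)^[n] ⊥ :=
  (monotone_duhamelMap hF f).monotone_iterate_of_le_map bot_le

lemma measurable_heatSemigroup_sub {G : ℝ → E → ℝ≥0∞} (hG : Measurable (Function.uncurry G)) :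
    Measurable fun q : (ℝ × E) × ℝ => heatSemigroup (q.1.1 - q.2) (G q.2) q.1.2 :=
  measurable_heatSemigroup (by fun_prop)
    (hG.comp (f := fun q : ((ℝ × E) × ℝ) × E => (q.1.2, q.2)) (by fun_prop)) (by fun_prop)

lemma measurable_duhamelMap (hF : Measurable F) (hf : Measurable f) {W : ℝ → E → ℝ≥0∞}
    (hW : Measurable (Function.uncurry W)) :
    Measurable (Function.uncurry (duhamelMap F f W)) := by
  refine (measurable_heatSemigroup (f := fun _ : ℝ × E => f) measurable_fst
    (hf.comp measurable_snd) measurable_snd).add ?_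
  have before : MeasurableSet {q : (ℝ × E) × ℝ | q.2 ∈ Set.Ioo 0 q.1.1} :=
    (measurableSet_lt measurable_const measurable_snd).inter
      (measurableSet_lt measurable_snd (by fun_prop))
  have integrand := (measurable_heatSemigroup_sub (G := fun s y => F (W s y))
    (hF.comp hW)).indicator before
  simp only [← lintegral_indicator measurableSet_Ioo]
  exact integrand.lintegral_prod_right' (ν := volume)

lemma measurable_iterate_duhamelMap (hF : Measurable F) (hf : Measurable f) (n : ℕ) :
    Measurable (Function.uncurry ((duhamelMap F f)^[n] ⊥)) := by
  induction n with
  | zero => exact measurable_const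
  | succ n ih =>
    rw [Function.iterate_succ_apply']
    exact measurable_duhamelMap hF hf ih

lemma measurable_minimalSolution (hF : Measurable F) (hf : Measurable f) :
    Measurable (Function.uncurry (minimalSolution F f)) := by
  simpa only [minimalSolution, Function.uncurry_def, iSup_apply] using
    Measurable.iSup fun n => measurable_iterate_duhamelMap hF hf n

lemma duhamelMap_iSup (hF : Monotone F) (hFc : Continuous F) (f : E → ℝ≥0∞)
    {W : ℕ → ℝ → E → ℝ≥0∞} (hW : ∀ n, Measurable (Function.uncurry (W n)))
    (hW_mono : Monotone W) : duhamelMap F f (⨆ n, W n) = ⨆ n, duhamelMap F f (W n) := by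
  ext t x
  have F_iSup (s : ℝ) : (fun y => F (⨆ n, W n s y)) = ⨆ n, fun y => F (W n s y) := by
    ext y
    rw [iSup_apply]
    exact hF.map_ciSup_of_continuousAt hFc.continuousAt
  have FW_meas (n : ℕ) : Measurable (Function.uncurry fun s y => F (W n s y)) :=
    hFc.measurable.comp (hW n)
  have FW_mono (s : ℝ) : Monotone fun n y => F (W n s y) := fun _ _ hmn y => hF (hW_mono hmn s y)
  simp only [duhamelMap, iSup_apply, F_iSup, ← ENNReal.add_iSup]
  congr 1
  simp_rw [heatSemigroup_iSup (fun n => (FW_meas n).of_uncurry_left) (FW_mono _), iSup_apply]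
  refine lintegral_iSup (fun n => ?_) fun _ _ hmn s =>
    heatSemigroup_mono_ae (.of_forall (FW_mono s hmn)) _ x
  exact (measurable_heatSemigroup_sub (FW_meas n)).comp (f := fun s => ((t, x), s)) (by fun_prop)

lemma duhamelMap_minimalSolution (hF : Monotone F) (hFc : Continuous F) (hf : Measurable f) :
    duhamelMap F f (minimalSolution F f) = minimalSolution F f := by
  unfold minimalSolution
  rw [duhamelMap_iSup hF hFc f (measurable_iterate_duhamelMap hFc.measurable hf)
    (monotone_iterate_duhamelMap hF f)]
  simp_rw [← Function.iterate_succ_apply' (duhamelMap F f)]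
  exact (monotone_iterate_duhamelMap hF f).iSup_nat_add 1

lemma minimalSolution_ae_le_of_supersolution (hF : Monotone F) {V : ℝ → E → ℝ≥0∞} {T : ℝ}
    (hV : ∀ t ∈ Set.Ioc 0 T, duhamelMap F f V t ≤ᵐ[volume] V t) :
    ∀ t ∈ Set.Ioc 0 T, minimalSolution F f t ≤ᵐ[volume] V t := by
  have iterate_le (n : ℕ) : ∀ t ∈ Set.Ioc 0 T, (duhamelMap F f)^[n] ⊥ t ≤ᵐ[volume] V t := by
    induction n with
    | zero => exact fun t _ => .of_forall fun x => bot_le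
    | succ n ih =>
      intro t ht
      rw [Function.iterate_succ_apply']
      filter_upwards [hV t ht] with x hx
      refine le_trans (add_le_add_right (setLIntegral_mono' measurableSet_Ioo fun s hs => ?_) _) hx
      exact heatSemigroup_mono_ae ((ih s ⟨hs.1, hs.2.le.trans ht.2⟩).mono fun _ hy => hF hy) _ x
  intro t ht
  filter_upwards [ae_all_iff.2 fun n => iterate_le n t ht] with x hx
  simpa only [minimalSolution, iSup_apply] using iSup_le hx

end MinimalSolution

section Supersolution

variable {E : Type*} [NormedAddCommGroup E] [InnerProductSpace ℝ E] [FiniteDimensional ℝ E]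
  [MeasurableSpace E] [BorelSpace E] {f : E → ℝ≥0∞} {σ : ℝ}

/-- The function `2 [S(t)f^σ]^{1/σ}`, which serves as the supersolution. -/
def heatMajorant (σ : ℝ) (f : E → ℝ≥0∞) (t : ℝ) (x : E) : ℝ≥0∞ :=
  2 * heatSemigroup t (fun y => f y ^ σ) x ^ (1 / σ)

lemma heatMajorant_ae_ne_top (hσ : 0 ≤ σ) {t : ℝ} {M : ℝ≥0∞} (hM_fin : M < ⊤)
    (hM : ∀ᵐ x, heatSemigroup t (fun y => f y ^ σ) x ≤ M) : ∀ᵐ x, heatMajorant σ f t x ≠ ⊤ := by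
  filter_upwards [hM] with x hx
  exact ENNReal.mul_ne_top ENNReal.ofNat_ne_top
    (ENNReal.rpow_ne_top_of_nonneg (by positivity) (hx.trans_lt hM_fin).ne)

lemma duhamelMap_heatMajorant_ae_le (hσ : 1 ≤ σ) (hf : Measurable f) {F : ℝ≥0∞ → ℝ≥0∞}
    {H : ℝ → ℝ≥0∞} {t : ℝ} (ht : 0 < t) {M : ℝ≥0∞} (hM_fin : M < ⊤)
    (hM : ∀ᵐ x, heatSemigroup t (fun y => f y ^ σ) x ≤ M)
    (hF : ∀ s ∈ Set.Ioo 0 t, ∀ᵐ y,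
      F (heatMajorant σ f s y) ≤ H s * heatSemigroup s (fun y => f y ^ σ) y)
    (hsmall : M ^ (1 - 1 / σ) * ∫⁻ s in Set.Ioo 0 t, H s ≤ 1) :
    duhamelMap F f (heatMajorant σ f) t ≤ᵐ[volume] heatMajorant σ f t := by
  set U : E → ℝ≥0∞ := heatSemigroup t fun y => f y ^ σ
  filter_upwards [hM] with x hUM
  have integral_le : ∫⁻ s in Set.Ioo 0 t,
      heatSemigroup (t - s) (fun y => F (heatMajorant σ f s y)) x ≤ U x ^ (1 / σ) := by
    calc _ ≤ (∫⁻ s in Set.Ioo 0 t, H s) * U x :=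
          lintegral_heatSemigroup_le (hf.pow_const σ) hF (hUM.trans_lt hM_fin).ne
      _ ≤ (∫⁻ s in Set.Ioo 0 t, H s) * (U x ^ (1 / σ) * M ^ (1 - 1 / σ)) := by
          gcongr
          exact le_rpow_mul_rpow_one_sub hUM (by positivity)
            ((div_le_one (by positivity)).2 hσ)
      _ = U x ^ (1 / σ) * (M ^ (1 - 1 / σ) * ∫⁻ s in Set.Ioo 0 t, H s) := by ring
      _ ≤ U x ^ (1 / σ) := mul_le_of_le_one_right' hsmall
  calc duhamelMap F f (heatMajorant σ f) t x
      ≤ U x ^ (1 / σ) + U x ^ (1 / σ) := add_le_add (heatSemigroup_le_rpow ht hσ hf x) integral_le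
    _ = heatMajorant σ f t x := (two_mul _).symm

end Supersolution

section TwoPowers

variable {a b : ℝ≥0∞} {A B σ : ℝ}

/-- The nonlinearity `u ↦ a u^A + b u^B` on `[0,∞]`. -/
def twoPowers (a b : ℝ≥0∞) (A B : ℝ) (u : ℝ≥0∞) : ℝ≥0∞ :=
  a * u ^ A + b * u ^ B

lemma monotone_twoPowers (a b : ℝ≥0∞) (hA : 0 ≤ A) (hB : 0 ≤ B) :
    Monotone (twoPowers a b A B) := by
  intro u v huv
  unfold twoPowers
  gcongr

lemma continuous_twoPowers (ha : a ≠ ⊤) (hb : b ≠ ⊤) (A B : ℝ) :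
    Continuous (twoPowers a b A B) :=
  ((ENNReal.continuous_const_mul ha).comp ENNReal.continuous_rpow_const).add
    ((ENNReal.continuous_const_mul hb).comp ENNReal.continuous_rpow_const)

lemma twoPowers_ne_top (ha : a ≠ ⊤) (hb : b ≠ ⊤) (hA : 0 ≤ A) (hB : 0 ≤ B) {u : ℝ≥0∞}
    (hu : u ≠ ⊤) : twoPowers a b A B u ≠ ⊤ := by
  unfold twoPowers
  finiteness

lemma two_mul_rpow_inv_rpow_le (hσ : 0 < σ) {r : ℝ} (hσr : σ ≤ r) {u M : ℝ≥0∞} (huM : u ≤ M) :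
    (2 * u ^ (1 / σ)) ^ r ≤ 2 ^ r * (M ^ (r / σ - 1) * u) := by
  rw [ENNReal.mul_rpow_of_nonneg _ _ (hσ.le.trans hσr), ← ENNReal.rpow_mul, one_div_mul_eq_div]
  gcongr
  exact rpow_le_rpow_sub_one_mul huM ((one_le_div hσ).2 hσr)

lemma twoPowers_two_mul_rpow_inv_le (a b : ℝ≥0∞) (hσ : 0 < σ) (hσA : σ ≤ A) (hσB : σ ≤ B)
    {u M : ℝ≥0∞} (huM : u ≤ M) :
    twoPowers a b A B (2 * u ^ (1 / σ)) ≤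
      twoPowers a b A B 2 * (M ^ (A / σ - 1) + M ^ (B / σ - 1)) * u := by
  calc twoPowers a b A B (2 * u ^ (1 / σ))
      ≤ a * (2 ^ A * (M ^ (A / σ - 1) * u)) + b * (2 ^ B * (M ^ (B / σ - 1) * u)) := by
        unfold twoPowers
        gcongr
        exacts [two_mul_rpow_inv_rpow_le hσ hσA huM, two_mul_rpow_inv_rpow_le hσ hσB huM]
    _ = a * 2 ^ A * (M ^ (A / σ - 1) * u) + b * 2 ^ B * (M ^ (B / σ - 1) * u) := by ring
    _ ≤ twoPowers a b A B 2 * (M ^ (A / σ - 1) * u) +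
          twoPowers a b A B 2 * (M ^ (B / σ - 1) * u) := by
        gcongr
        exacts [le_self_add, le_add_self]
    _ = twoPowers a b A B 2 * (M ^ (A / σ - 1) + M ^ (B / σ - 1)) * u := by ring

variable {E : Type*} [NormedAddCommGroup E] [InnerProductSpace ℝ E] [FiniteDimensional ℝ E]
  [MeasurableSpace E] [BorelSpace E] {f : E → ℝ≥0∞}

lemma minimalSolution_twoPowers_ae_le_heatMajorant (ha : a ≠ ⊤) (hb : b ≠ ⊤) (hσ : 1 ≤ σ)
    (hσA : σ ≤ A) (hσB : σ ≤ B) (hf : Measurable f) {M : ℝ → ℝ≥0∞} {T : ℝ} {γ : ℝ≥0∞}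
    (hM_fin : ∀ t ∈ Set.Ioc 0 T, M t < ⊤)
    (hM : ∀ t ∈ Set.Ioc 0 T, ∀ᵐ x, heatSemigroup t (fun y => f y ^ σ) x ≤ M t)
    (hγ : twoPowers a b A B 2 * γ ≤ 1)
    (hsmall : ∀ t ∈ Set.Ioc 0 T, M t ^ (1 - 1 / σ) *
      ∫⁻ s in Set.Ioo 0 t, (M s ^ (A / σ - 1) + M s ^ (B / σ - 1)) ≤ γ) :
    ∀ t ∈ Set.Ioc 0 T,
      minimalSolution (twoPowers a b A B) f t ≤ᵐ[volume] heatMajorant σ f t := by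
  have hσ₀ : 0 < σ := one_pos.trans_le hσ
  have hA : 0 ≤ A := hσ₀.le.trans hσA
  have hB : 0 ≤ B := hσ₀.le.trans hσB
  refine minimalSolution_ae_le_of_supersolution (monotone_twoPowers a b hA hB) fun t ht => ?_
  refine duhamelMap_heatMajorant_ae_le
    (H := fun s => twoPowers a b A B 2 * (M s ^ (A / σ - 1) + M s ^ (B / σ - 1)))
    hσ hf ht.1 (hM_fin t ht) (hM t ht) (fun s hs => ?_) ?_
  · filter_upwards [hM s ⟨hs.1, hs.2.le.trans ht.2⟩] with y hy
    exact twoPowers_two_mul_rpow_inv_le a b hσ₀ hσA hσB hy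
  · rw [lintegral_const_mul' _ _ (twoPowers_ne_top ha hb hA hB ENNReal.ofNat_ne_top),
      mul_left_comm]
    exact (mul_le_mul_right (hsmall t ht) _).trans hγ

end TwoPowers

section RealValued

variable {N : ℕ} {w₀ : Euc N → ℝ}

lemma heatS_eq_heatSemigroup {t : ℝ} (ht : 0 < t) (φ : Euc N → ℝ) :
    heatS N t φ = heatSemigroup t fun y => ENNReal.ofReal (φ y) := by
  ext x
  simp only [heatS, heatSemigroup, lconvolution_def, heatKernel, neg_add_eq_sub,
    finrank_euclideanSpace_fin]
  refine lintegral_congr fun y => ?_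
  rw [ENNReal.ofReal_mul (by positivity), mul_comm]

lemma heatS_rpow_eq_heatSemigroup (hw₀ : ∀ x, 0 ≤ w₀ x) {σ : ℝ} (hσ : 0 ≤ σ) {t : ℝ}
    (ht : 0 < t) :
    heatS N t (fun y => w₀ y ^ σ) = heatSemigroup t fun y => ENNReal.ofReal (w₀ y) ^ σ := by
  simp_rw [heatS_eq_heatSemigroup ht, ENNReal.ofReal_rpow_of_nonneg (hw₀ _) hσ]

lemma ofReal_mul_rpow_add_mul_rpow_toReal {α β A B : ℝ} (hα : 0 ≤ α) (hβ : 0 ≤ β) (hA : 0 ≤ A)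
    (hB : 0 ≤ B) {u : ℝ≥0∞} (hu : u ≠ ⊤) :
    ENNReal.ofReal (α * u.toReal ^ A + β * u.toReal ^ B) =
      twoPowers (ENNReal.ofReal α) (ENNReal.ofReal β) A B u := by
  rw [ENNReal.ofReal_add (by positivity) (by positivity), ENNReal.ofReal_mul hα,
    ENNReal.ofReal_mul hβ, ← ENNReal.ofReal_rpow_of_nonneg ENNReal.toReal_nonneg hA,
    ← ENNReal.ofReal_rpow_of_nonneg ENNReal.toReal_nonneg hB, ENNReal.ofReal_toReal hu, twoPowers]

lemma duhamelScalar_toReal {α β A B : ℝ} (hα : 0 ≤ α) (hβ : 0 ≤ β) (hA : 0 ≤ A) (hB : 0 ≤ B)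
    {W : ℝ → Euc N → ℝ≥0∞} {t : ℝ} (ht : 0 < t)
    (hW : duhamelMap (twoPowers (ENNReal.ofReal α) (ENNReal.ofReal β) A B)
      (fun y => ENNReal.ofReal (w₀ y)) W t = W t)
    (hW_fin : ∀ s ∈ Set.Ioc 0 t, ∀ᵐ x, W s x ≠ ⊤) :
    DuhamelScalar N α β A B w₀ (fun x s => (W s x).toReal) t := by
  filter_upwards [hW_fin t ⟨ht, le_rfl⟩] with x hx
  rw [ENNReal.ofReal_toReal hx, heatS_eq_heatSemigroup ht, ← hW, duhamelMap]
  congr 1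
  refine setLIntegral_congr_fun measurableSet_Ioo fun s hs => ?_
  beta_reduce
  rw [heatS_eq_heatSemigroup (sub_pos.2 hs.2)]
  refine lintegral_congr_ae ?_
  filter_upwards [hW_fin s ⟨hs.1, hs.2.le⟩] with y hy
  rw [ofReal_mul_rpow_add_mul_rpow_toReal hα hβ hA hB hy]

end RealValued

theorem statement6_general (N : ℕ) {α β A B σ : ℝ} (hα : 0 ≤ α) (hβ : 0 ≤ β) (hσ : 1 ≤ σ)
    (hσA : σ ≤ A) (hσB : σ ≤ B) :
    ∃ γ₂ : ℝ, 0 < γ₂ ∧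
      ∀ w₀ : Euc N → ℝ, Measurable w₀ → (∀ x, 0 ≤ w₀ x) → ∀ T : ℝ,
        (∀ t : ℝ, 0 < t → t ≤ T → heatSup N t (fun x => w₀ x ^ σ) < ⊤) →
        (∀ t : ℝ, 0 < t → t ≤ T →
          heatSup N t (fun x => w₀ x ^ σ) ^ (1 - 1 / σ) *
            (∫⁻ s in Set.Ioo 0 t,
              (heatSup N s (fun x => w₀ x ^ σ) ^ (A / σ - 1) +
                heatSup N s (fun x => w₀ x ^ σ) ^ (B / σ - 1))) ≤
              ENNReal.ofReal γ₂) →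
        ∃ w : Euc N → ℝ → ℝ, (∀ x t, 0 ≤ w x t) ∧ Measurable (Function.uncurry w) ∧
          ∀ t : ℝ, 0 < t → t ≤ T →
            DuhamelScalar N α β A B w₀ w t ∧
            ∀ᵐ x ∂(volume : Measure (Euc N)), ENNReal.ofReal (w x t) ≤
              2 * heatS N t (fun y => w₀ y ^ σ) x ^ (1 / σ) := by
  have hσ₀ : 0 ≤ σ := zero_le_one.trans hσ
  have hA : 0 ≤ A := hσ₀.trans hσA
  have hB : 0 ≤ B := hσ₀.trans hσB
  set F := twoPowers (ENNReal.ofReal α) (ENNReal.ofReal β) A B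
  have hFc : Continuous F := continuous_twoPowers ENNReal.ofReal_ne_top ENNReal.ofReal_ne_top A B
  obtain ⟨γ₂, hγ₂, hFγ₂⟩ : ∃ γ₂ : ℝ, 0 < γ₂ ∧ F 2 * ENNReal.ofReal γ₂ ≤ 1 :=
    exists_pos_mul_ofReal_le_one <|
      twoPowers_ne_top ENNReal.ofReal_ne_top ENNReal.ofReal_ne_top hA hB ENNReal.ofNat_ne_top
  refine ⟨γ₂, hγ₂, fun w₀ hw₀ hw₀_nonneg T hfin hsmall => ?_⟩
  set f : Euc N → ℝ≥0∞ := fun y => ENNReal.ofReal (w₀ y)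
  have hf : Measurable f := hw₀.ennreal_ofReal
  have heatS_eq {t : ℝ} (ht : 0 < t) := heatS_rpow_eq_heatSemigroup hw₀_nonneg hσ₀ ht
  have hM : ∀ t ∈ Set.Ioc 0 T, ∀ᵐ x, heatSemigroup t (fun y => f y ^ σ) x ≤
      heatSup N t fun x => w₀ x ^ σ := fun t ht => heatS_eq ht.1 ▸ ENNReal.ae_le_essSup _
  have W_le := minimalSolution_twoPowers_ae_le_heatMajorant ENNReal.ofReal_ne_top
    ENNReal.ofReal_ne_top hσ hσA hσB hf (fun t ht => hfin t ht.1 ht.2) hM hFγ₂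
    fun t ht => hsmall t ht.1 ht.2
  have W_fin : ∀ t ∈ Set.Ioc 0 T, ∀ᵐ x, minimalSolution F f t x ≠ ⊤ := fun t ht => by
    filter_upwards [W_le t ht, heatMajorant_ae_ne_top hσ₀ (hfin t ht.1 ht.2) (hM t ht)]
      with x hle hne using ne_top_of_le_ne_top hne hle
  refine ⟨fun x t => (minimalSolution F f t x).toReal, fun _ _ => ENNReal.toReal_nonneg,
    ((measurable_minimalSolution hFc.measurable hf).comp measurable_swap).ennreal_toReal,
    fun t ht htT => ⟨?_, ?_⟩⟩
  · exact duhamelScalar_toReal hα hβ hA hB ht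
      (congrFun (duhamelMap_minimalSolution (monotone_twoPowers _ _ hA hB) hFc hf) t)
      fun s hs => W_fin s ⟨hs.1, hs.2.trans htT⟩
  · filter_upwards [W_le t ⟨ht, htT⟩] with x hx
    rw [heatS_eq ht]
    exact ENNReal.ofReal_toReal_le.trans hx

/-- Lemma 2.4 (ii)-(b): if `min{A,B} ≥ 1` and `1 ≤ σ ≤ min{A,B}`, there is
`γ₂ > 0` such that the smallness condition
`sup_{0<t≤T} ‖S(t)w₀^σ‖_∞^{1-1/σ} ∫₀ᵗ (‖S(s)w₀^σ‖_∞^{A/σ-1} + ‖S(s)w₀^σ‖_∞^{B/σ-1}) ds ≤ γ₂`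
implies the existence of a solution of (E) on `ℝ^N × (0,T]` with
`0 ≤ w ≤ 2 [S(t)w₀^σ]^{1/σ}`. -/
theorem statement6 (N : ℕ) (hN : 1 ≤ N) (α β A B σ : ℝ) (hα : 1 ≤ α) (hβ : 1 ≤ β)
    (hA : 0 ≤ A) (hB : 0 ≤ B) (hAB : 1 ≤ min A B) (hσ : 1 ≤ σ) (hσ' : σ ≤ min A B) :
    ∃ γ₂ : ℝ, 0 < γ₂ ∧
      ∀ w₀ : Euc N → ℝ, Measurable w₀ → (∀ x, 0 ≤ w₀ x) →
        LocallyIntegrable (fun x => w₀ x ^ σ) volume →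
        (∀ t : ℝ, 0 < t → heatSup N t (fun x => w₀ x ^ σ) < ⊤) →
        ∀ T : ℝ, 0 < T →
        (∀ t : ℝ, 0 < t → t ≤ T →
          heatSup N t (fun x => w₀ x ^ σ) ^ (1 - 1 / σ) *
            (∫⁻ s in Set.Ioo 0 t,
              (heatSup N s (fun x => w₀ x ^ σ) ^ (A / σ - 1) +
                heatSup N s (fun x => w₀ x ^ σ) ^ (B / σ - 1))) ≤
              ENNReal.ofReal γ₂) →
        ∃ w : Euc N → ℝ → ℝ, (∀ x t, 0 ≤ w x t) ∧ Measurable (Function.uncurry w) ∧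
          ∀ t : ℝ, 0 < t → t ≤ T →
            DuhamelScalar N α β A B w₀ w t ∧
            ∀ᵐ x ∂(volume : Measure (Euc N)), ENNReal.ofReal (w x t) ≤
              2 * heatS N t (fun y => w₀ y ^ σ) x ^ (1 / σ) := by
  obtain ⟨γ₂, hγ₂, solve⟩ := statement6_general N (zero_le_one.trans hα) (zero_le_one.trans hβ) hσ
    (hσ'.trans (min_le_left A B)) (hσ'.trans (min_le_right A B))
  exact ⟨γ₂, hγ₂, fun w₀ hw₀ hw₀_nonneg _ hfin T _ =>
    solve w₀ hw₀ hw₀_nonneg T fun t ht _ => hfin t ht⟩
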